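/- arXiv:2402.16489 — 2 statements merged into one kernel-verified Lean document; each statement's English description precedes it below -/
import Mathlib

section
/- Let α > 1, β > 1 be real numbers and let σ ∈ [0, min(α, β)]. Then there exists a constant C > 0, depending only on α, β and σ, such that for every integer N ≥ 1 and all points y, x_i, x_j ∈ ℝ^N with x_i ≠ x_j one has (1+|y−x_i|)^{−α}·(1+|y−x_j|)^{−β} ≤ C·|x_i−x_j|^{−σ}·( (1+|y−x_i|)^{−(α+β−σ)} + (1+|y−x_j|)^{−(α+β−σ)} ). -/
/-!
By the triangle inequality, `dist xi xj` is at most twice the larger, `b`, of the two quantities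
`1 + dist y xi` and `1 + dist y xj`. Hence a factor `b ^ (-σ)` of the left-hand side is at most
`2 ^ σ * dist xi xj ^ (-σ)`, and all the remaining decay may be transferred to the smaller quantity.
-/

lemma rpow_neg_le_mul_rpow_neg {b c d σ : ℝ} (hc : 0 < c) (hd : 0 < d) (hdb : d ≤ c * b)
    (hσ : 0 ≤ σ) : b ^ (-σ) ≤ c ^ σ * d ^ (-σ) := by
  calc b ^ (-σ) ≤ (d / c) ^ (-σ) :=
        Real.rpow_le_rpow_of_nonpos (div_pos hd hc) ((div_le_iff₀' hc).mpr hdb)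
          (neg_nonpos.mpr hσ)
    _ = c ^ σ * d ^ (-σ) := by
        rw [Real.div_rpow hd.le hc.le, Real.rpow_neg hc.le, div_inv_eq_mul, mul_comm]

lemma rpow_neg_mul_rpow_neg_le_of_le {a b α β σ : ℝ} (ha : 0 < a) (hab : a ≤ b) (hσ : σ ≤ β) :
    a ^ (-α) * b ^ (-β) ≤ b ^ (-σ) * a ^ (-(α + β - σ)) := by
  have hb : 0 < b := ha.trans_le hab
  have transfer : b ^ (-(β - σ)) ≤ a ^ (-(β - σ)) :=
    Real.rpow_le_rpow_of_nonpos ha hab (neg_nonpos.mpr (sub_nonneg.mpr hσ))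
  calc a ^ (-α) * b ^ (-β) = b ^ (-σ) * (a ^ (-α) * b ^ (-(β - σ))) := by
        rw [mul_left_comm, ← Real.rpow_add hb]
        ring_nf
    _ ≤ b ^ (-σ) * (a ^ (-α) * a ^ (-(β - σ))) := by gcongr
    _ = b ^ (-σ) * a ^ (-(α + β - σ)) := by
        rw [← Real.rpow_add ha]
        ring_nf

lemma rpow_neg_mul_rpow_neg_le_of_le_add {a b d α β σ : ℝ} (ha : 0 < a) (hb : 0 < b) (hd : 0 < d)
    (hdab : d ≤ a + b) (hσ0 : 0 ≤ σ) (hσα : σ ≤ α) (hσβ : σ ≤ β) :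
    a ^ (-α) * b ^ (-β) ≤
      2 ^ σ * d ^ (-σ) * (a ^ (-(α + β - σ)) + b ^ (-(α + β - σ))) := by
  wlog hab : a ≤ b generalizing a b α β
  · rw [mul_comm (a ^ (-α)), add_comm (a ^ _), add_comm α]
    exact this hb ha (by rwa [add_comm]) hσβ hσα (le_of_not_ge hab)
  calc a ^ (-α) * b ^ (-β) ≤ b ^ (-σ) * a ^ (-(α + β - σ)) :=
        rpow_neg_mul_rpow_neg_le_of_le ha hab hσβ
    _ ≤ 2 ^ σ * d ^ (-σ) * a ^ (-(α + β - σ)) := by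
        gcongr
        exact rpow_neg_le_mul_rpow_neg two_pos hd (by linarith) hσ0
    _ ≤ 2 ^ σ * d ^ (-σ) * (a ^ (-(α + β - σ)) + b ^ (-(α + β - σ))) := by
        gcongr
        exact le_add_of_nonneg_right (by positivity)

theorem interaction_inequality_general {X : Type*} [PseudoMetricSpace X] {α β σ : ℝ}
    (hσ0 : 0 ≤ σ) (hσ : σ ≤ min α β) (y : X) {xi xj : X} (hd : 0 < dist xi xj) :
    (1 + dist y xi) ^ (-α) * (1 + dist y xj) ^ (-β) ≤
      2 ^ σ * dist xi xj ^ (-σ) *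
        ((1 + dist y xi) ^ (-(α + β - σ)) + (1 + dist y xj) ^ (-(α + β - σ))) := by
  have triangle : dist xi xj ≤ (1 + dist y xi) + (1 + dist y xj) := by
    linarith [dist_triangle_left xi xj y]
  exact rpow_neg_mul_rpow_neg_le_of_le_add (by positivity) (by positivity) hd triangle hσ0
    (hσ.trans (min_le_left α β)) (hσ.trans (min_le_right α β))

/-- Lemma B.2 of the paper: a pointwise interaction inequality between two
bubble-type weights centered at distinct points. -/
theorem interaction_inequality (α β σ : ℝ) (hα : 1 < α) (hβ : 1 < β)
    (hσ0 : 0 ≤ σ) (hσ : σ ≤ min α β) :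
    ∃ C > 0, ∀ N : ℕ, 1 ≤ N → ∀ y xi xj : EuclideanSpace ℝ (Fin N), xi ≠ xj →
      (1 + ‖y - xi‖) ^ (-α) * (1 + ‖y - xj‖) ^ (-β) ≤
        C * ‖xi - xj‖ ^ (-σ) *
          ((1 + ‖y - xi‖) ^ (-(α + β - σ)) + (1 + ‖y - xj‖) ^ (-(α + β - σ))) := by
  refine ⟨2 ^ σ, by positivity, fun N _ y xi xj hne => ?_⟩
  simpa only [dist_eq_norm] using interaction_inequality_general hσ0 hσ y (dist_pos.mpr hne)
end

section
/- Let N ≥ 3 be an integer and let σ ∈ (0, N−2). Then there exists a constant C > 0 such that for every y ∈ ℝ^N, ∫_{ℝ^N} |y−z|^{−(N−2)} · (1+|z|)^{−(2+σ)} dz ≤ C·(1+|y|)^{−σ}. -/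
/-!
Put `R = 1 + ‖y‖`, `a = N - 2` and `b = 2 + σ`. By the triangle inequality, `‖y - z‖` and `1 + ‖z‖`
cannot both be smaller than `R / 2`. Where the first is large it is comparable to `R + ‖z‖`, where
the second is large it is comparable to `R + ‖y - z‖`, so the integrand is at most a constant times
`‖z‖ ^ (-b) * (R + ‖z‖) ^ (-a) + ‖y - z‖ ^ (-a) * (R + ‖y - z‖) ^ (-b)`. The summands are functions
of `z` and of `y - z`, jointly homogeneous of degree `-(a + b)` with `R`, so dilating by `R` shows
that their integrals are constants times `R ^ (N - (a + b)) = R ^ (-σ)`. The constants are finite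
because `a, b < N` (at the origin) and `a + b > N` (at infinity).
-/

open MeasureTheory

open Module (finrank)

theorem rpow_neg_le_mul_rpow_neg_s1 {s t c a : ℝ} (hs : 0 < s) (hc : 0 < c) (ha : 0 ≤ a)
    (h : s ≤ c * t) : t ^ (-a) ≤ c ^ a * s ^ (-a) := by
  calc t ^ (-a) ≤ (s / c) ^ (-a) :=
        Real.rpow_le_rpow_of_nonpos (by positivity) ((div_le_iff₀' hc).2 h) (neg_nonpos.2 ha)
    _ = c ^ a * s ^ (-a) := by
        rw [Real.div_rpow hs.le hc.le, Real.rpow_neg hc.le, div_inv_eq_mul, mul_comm]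

/-- The radial kernel which behaves like a multiple of `‖x‖ ^ (-a)` for `‖x‖ ≪ R` and like
`‖x‖ ^ (-(a + b))` for `‖x‖ ≫ R`. Such kernels with `R = 1 + ‖y‖` dominate the integrand of the
convolution at `y`. Their value at `x = 0` is `0` for `a ≠ 0`, by the convention for `0 ^ (-a)`. -/
noncomputable def twoScaleKernel {E : Type*} [Norm E] (a b R : ℝ) (x : E) : ℝ :=
  ‖x‖ ^ (-a) * (R + ‖x‖) ^ (-b)

section Pointwise

variable {E : Type*} [NormedAddCommGroup E] {a b R : ℝ}

theorem twoScaleKernel_nonneg (hR : 0 ≤ R) (x : E) : 0 ≤ twoScaleKernel a b R x := by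
  unfold twoScaleKernel
  positivity

theorem twoScaleKernel_smul [NormedSpace ℝ E] {c : ℝ} (hc : 0 < c) (hR : 0 ≤ R) (x : E) :
    twoScaleKernel a b (c * R) (c • x) = c ^ (-(a + b)) * twoScaleKernel a b R x := by
  simp only [twoScaleKernel]
  rw [norm_smul, Real.norm_of_nonneg hc.le, ← mul_add, Real.mul_rpow hc.le (norm_nonneg x),
    Real.mul_rpow hc.le (by positivity), neg_add, Real.rpow_add hc]
  ring

theorem twoScaleKernel_eq_rpow_mul_comp_inv_smul [NormedSpace ℝ E] (hR : 0 < R) (x : E) :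
    twoScaleKernel a b R x = R ^ (-(a + b)) * twoScaleKernel a b 1 (R⁻¹ • x) := by
  rw [← twoScaleKernel_smul hR zero_le_one, mul_one, smul_inv_smul₀ hR.ne']

theorem norm_sub_rpow_mul_one_add_norm_rpow_le (ha : 0 ≤ a) (hb : 0 ≤ b) (y : E) {z : E}
    (hz : z ≠ 0) :
    ‖y - z‖ ^ (-a) * (1 + ‖z‖) ^ (-b) ≤
      5 ^ a * twoScaleKernel b a (1 + ‖y‖) z + 3 ^ b * twoScaleKernel a b (1 + ‖y‖) (y - z) := by
  have hz_pos : 0 < ‖z‖ := norm_pos_iff.2 hz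
  have h_nonneg (c d : ℝ) (x : E) : 0 ≤ twoScaleKernel c d (1 + ‖y‖) x :=
    twoScaleKernel_nonneg (by positivity) x
  rcases le_total ((1 + ‖y‖) / 2) ‖y - z‖ with h_far | h_near
  · have h_comparable : 1 + ‖y‖ + ‖z‖ ≤ 5 * ‖y - z‖ := by
      linarith [norm_le_norm_add_norm_sub y z]
    calc ‖y - z‖ ^ (-a) * (1 + ‖z‖) ^ (-b)
        ≤ (5 ^ a * (1 + ‖y‖ + ‖z‖) ^ (-a)) * ‖z‖ ^ (-b) :=
          mul_le_mul (rpow_neg_le_mul_rpow_neg_s1 (by positivity) (by norm_num) ha h_comparable)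
            (Real.rpow_le_rpow_of_nonpos hz_pos (by linarith) (neg_nonpos.2 hb))
            (by positivity) (by positivity)
      _ = 5 ^ a * twoScaleKernel b a (1 + ‖y‖) z := by unfold twoScaleKernel; ring
      _ ≤ _ := le_add_of_nonneg_right (mul_nonneg (by positivity) (h_nonneg a b _))
  · have h_comparable : 1 + ‖y‖ + ‖y - z‖ ≤ 3 * (1 + ‖z‖) := by
      linarith [norm_le_norm_add_norm_sub' y z]
    calc ‖y - z‖ ^ (-a) * (1 + ‖z‖) ^ (-b)
        ≤ ‖y - z‖ ^ (-a) * (3 ^ b * (1 + ‖y‖ + ‖y - z‖) ^ (-b)) := by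
          gcongr
          exact rpow_neg_le_mul_rpow_neg_s1 (by positivity) (by norm_num) hb h_comparable
      _ = 3 ^ b * twoScaleKernel a b (1 + ‖y‖) (y - z) := by unfold twoScaleKernel; ring
      _ ≤ _ := le_add_of_nonneg_left (mul_nonneg (by positivity) (h_nonneg b a _))

end Pointwise

section Integral

variable {E : Type*} [NormedAddCommGroup E] [NormedSpace ℝ E] [FiniteDimensional ℝ E]
  [MeasurableSpace E] [BorelSpace E] (μ : Measure E) [μ.IsAddHaarMeasure] {a b R : ℝ}

theorem integrable_twoScaleKernel_one (ha0 : 0 ≤ a) (ha : a < finrank ℝ E)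
    (hab : finrank ℝ E < a + b) : Integrable (twoScaleKernel a b 1 : E → ℝ) μ := by
  have h_dim : 1 ≤ finrank ℝ E := by exact_mod_cast ha0.trans_lt ha
  have h_meas : Measurable (twoScaleKernel a b 1 : E → ℝ) := by
    unfold twoScaleKernel
    fun_prop
  have h_norm (x : E) : ‖twoScaleKernel a b 1 x‖ = twoScaleKernel a b 1 x :=
    Real.norm_of_nonneg (twoScaleKernel_nonneg zero_le_one x)
  have h_ball : IntegrableOn (twoScaleKernel a b 1) (Metric.ball (0 : E) 1) μ := by
    refine integrableOn_ball_of_norm_le_rpow (C := 1) h_dim ha (.of_forall fun x ↦ ?_)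
      h_meas.aestronglyMeasurable
    rw [h_norm, one_mul]
    exact mul_le_of_le_one_right (by positivity)
      (Real.rpow_le_one_of_one_le_of_nonpos (by linarith [norm_nonneg x]) (by linarith))
  have h_compl : IntegrableOn (twoScaleKernel a b 1) (Metric.ball (0 : E) 1)ᶜ μ := by
    refine Integrable.mono' ((integrable_one_add_norm hab).const_mul (2 ^ a)).integrableOn
      h_meas.aestronglyMeasurable ?_
    filter_upwards [ae_restrict_mem measurableSet_ball.compl] with x hx
    have hx_one : 1 ≤ ‖x‖ := by simpa using hx
    rw [h_norm, twoScaleKernel, neg_add, Real.rpow_add (by positivity), ← mul_assoc]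
    gcongr
    exact rpow_neg_le_mul_rpow_neg_s1 (by positivity) two_pos ha0 (by linarith)
  rw [← integrableOn_univ, ← Set.union_compl_self (Metric.ball (0 : E) 1)]
  exact h_ball.union h_compl

theorem integrable_twoScaleKernel (hR : 0 < R) (ha0 : 0 ≤ a) (ha : a < finrank ℝ E)
    (hab : finrank ℝ E < a + b) : Integrable (twoScaleKernel a b R : E → ℝ) μ := by
  rw [funext (twoScaleKernel_eq_rpow_mul_comp_inv_smul hR)]
  exact ((integrable_twoScaleKernel_one μ ha0 ha hab).comp_smul (inv_ne_zero hR.ne')).const_mul _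

theorem integral_twoScaleKernel (hR : 0 < R) :
    ∫ x : E, twoScaleKernel a b R x ∂μ =
      R ^ (finrank ℝ E - (a + b)) * ∫ x : E, twoScaleKernel a b 1 x ∂μ := by
  calc ∫ x : E, twoScaleKernel a b R x ∂μ
      = R ^ (-(a + b)) * ∫ x : E, twoScaleKernel a b 1 (R⁻¹ • x) ∂μ := by
        simp_rw [twoScaleKernel_eq_rpow_mul_comp_inv_smul hR, integral_const_mul]
    _ = R ^ (-(a + b)) * (R ^ finrank ℝ E * ∫ x : E, twoScaleKernel a b 1 x ∂μ) := by
        rw [Measure.integral_comp_inv_smul_of_nonneg μ _ hR.le, smul_eq_mul]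
    _ = R ^ (finrank ℝ E - (a + b)) * ∫ x : E, twoScaleKernel a b 1 x ∂μ := by
        rw [← mul_assoc, ← Real.rpow_natCast, ← Real.rpow_add hR, neg_add_eq_sub]

theorem integrable_twoScaleKernel_add_comp_sub_left (hR : 0 < R) (ha : a < finrank ℝ E)
    (hb : b < finrank ℝ E) (hab : finrank ℝ E < a + b) (c d : ℝ) (y : E) :
    Integrable (fun z ↦ c * twoScaleKernel b a R z + d * twoScaleKernel a b R (y - z)) μ :=
  ((integrable_twoScaleKernel μ hR (by linarith) hb (by linarith)).const_mul c).add
    (((integrable_twoScaleKernel μ hR (by linarith) ha hab).comp_sub_left y).const_mul d)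

theorem integral_twoScaleKernel_add_comp_sub_left (hR : 0 < R) (ha : a < finrank ℝ E)
    (hb : b < finrank ℝ E) (hab : finrank ℝ E < a + b) (c d : ℝ) (y : E) :
    ∫ z, (c * twoScaleKernel b a R z + d * twoScaleKernel a b R (y - z)) ∂μ =
      (c * ∫ x : E, twoScaleKernel b a 1 x ∂μ + d * ∫ x : E, twoScaleKernel a b 1 x ∂μ) *
        R ^ (finrank ℝ E - (a + b)) := by
  have h_int_ba : Integrable (twoScaleKernel b a R : E → ℝ) μ :=
    integrable_twoScaleKernel μ hR (by linarith) hb (by linarith)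
  have h_int_ab : Integrable (twoScaleKernel a b R : E → ℝ) μ :=
    integrable_twoScaleKernel μ hR (by linarith) ha hab
  rw [integral_add (h_int_ba.const_mul c) ((h_int_ab.comp_sub_left y).const_mul d),
    integral_const_mul, integral_const_mul,
    integral_sub_left_eq_self (twoScaleKernel a b R) μ y,
    integral_twoScaleKernel μ hR, integral_twoScaleKernel μ hR, add_comm b a]
  ring

theorem kernel_convolution_estimate_small_general (ha : a < finrank ℝ E) (hb : b < finrank ℝ E)
    (hab : finrank ℝ E < a + b) :
    ∃ C > 0, ∀ y : E,
      Integrable (fun z ↦ ‖y - z‖ ^ (-a) * (1 + ‖z‖) ^ (-b)) μ ∧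
        ∫ z, ‖y - z‖ ^ (-a) * (1 + ‖z‖) ^ (-b) ∂μ ≤
          C * (1 + ‖y‖) ^ (finrank ℝ E - (a + b)) := by
  have ha0 : 0 ≤ a := by linarith
  have hb0 : 0 ≤ b := by linarith
  have : Nontrivial E :=
    Module.nontrivial_of_finrank_pos (R := ℝ) (by exact_mod_cast ha0.trans_lt ha)
  set A := 5 ^ a * ∫ x : E, twoScaleKernel b a 1 x ∂μ + 3 ^ b * ∫ x : E, twoScaleKernel a b 1 x ∂μ
    with hA_def
  have hA : 0 ≤ A :=
    add_nonneg
      (mul_nonneg (by positivity) (integral_nonneg (twoScaleKernel_nonneg zero_le_one)))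
      (mul_nonneg (by positivity) (integral_nonneg (twoScaleKernel_nonneg zero_le_one)))
  refine ⟨A + 1, by positivity, fun y ↦ ?_⟩
  have hR : 0 < 1 + ‖y‖ := by positivity
  have h_int_majorant :=
    integrable_twoScaleKernel_add_comp_sub_left μ hR ha hb hab (5 ^ a) (3 ^ b) y
  have h_le : ∀ᵐ z ∂μ, ‖y - z‖ ^ (-a) * (1 + ‖z‖) ^ (-b) ≤
      5 ^ a * twoScaleKernel b a (1 + ‖y‖) z + 3 ^ b * twoScaleKernel a b (1 + ‖y‖) (y - z) :=
    (Measure.ae_ne μ (0 : E)).mono fun _ ↦ norm_sub_rpow_mul_one_add_norm_rpow_le ha0 hb0 y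
  have h_int : Integrable (fun z ↦ ‖y - z‖ ^ (-a) * (1 + ‖z‖) ^ (-b)) μ := by
    refine h_int_majorant.mono' (by fun_prop) (h_le.mono fun z hz ↦ ?_)
    rwa [Real.norm_of_nonneg (by positivity)]
  refine ⟨h_int, (integral_mono_ae h_int h_int_majorant h_le).trans ?_⟩
  rw [integral_twoScaleKernel_add_comp_sub_left μ hR ha hb hab, ← hA_def]
  gcongr
  exact le_add_of_nonneg_right zero_le_one

end Integral

/-- First case of Lemma B.3 of the paper: an estimate for the Newtonian-kernel
convolution of a polynomially decaying weight, for `0 < σ < N - 2`. -/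
theorem kernel_convolution_estimate_small (N : ℕ) (hN : 3 ≤ N) (σ : ℝ)
    (hσ0 : 0 < σ) (hσ : σ < (N : ℝ) - 2) :
    ∃ C > 0, ∀ y : EuclideanSpace ℝ (Fin N),
      ∫ z : EuclideanSpace ℝ (Fin N),
          ‖y - z‖ ^ (-((N : ℝ) - 2)) * (1 + ‖z‖) ^ (-(2 + σ)) ≤
        C * (1 + ‖y‖) ^ (-σ) := by
  have h_dim : (finrank ℝ (EuclideanSpace ℝ (Fin N)) : ℝ) = N := by simp
  obtain ⟨C, hC, h⟩ := kernel_convolution_estimate_small_general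
    (volume : Measure (EuclideanSpace ℝ (Fin N))) (a := N - 2) (b := 2 + σ)
    (by linarith) (by linarith) (by linarith)
  have h_exp : (N : ℝ) - ((N - 2) + (2 + σ)) = -σ := by ring
  exact ⟨C, hC, fun y ↦ by simpa only [h_dim, h_exp] using (h y).2⟩
end
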